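/- Let 1 < q < 2 < p < ∞. A linear operator T : ℝ² → ℝ² with operator norm ‖T‖ = 1 from ℓ^p_2 to ℓ^q_2 is an extreme point of the closed unit ball of L(ℓ^p_2, ℓ^q_2) if and only if either (a) T attains its norm on two linearly independent vectors, or (b) T = x^{p−1}⊗y for some ℓ^p-unit vector x = (x1,x2) and ℓ^q-unit vector y = (y1,y2) with x1·x2·y1·y2 = 0. -/

import Mathlib

/-!
If `T` attains its norm at `z` and `T` is inside a segment of contractions, then by strict convexity
of the ℓ^q norm the endpoints agree with `T` at `z` (`app_eq_of_segment`). Two independent such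
vectors therefore make `T` extreme.

If `T` attains its norm at `x` with image `y` and a coordinate of `x` or `y` vanishes, the growth of
the two norms in tangent directions is incompatible: along the tangent at `x` the ℓ^p norm grows at
most like `s²`, and like `|s| ^ p` at a signed unit vector, whereas the ℓ^q norm grows at least like
`s²`, and like `|s| ^ q` at a signed unit vector. As `q < 2 < p`, a contraction with `x ↦ y` must
kill the tangent direction, hence equals `x^{p-1} ⊗ y` (`rigid`). This gives extremality in case (b),
and it shows that every norm-one operator attaining its norm at such an `x` is of the form (b).

It remains to see that `T` is not extreme if it attains its norm only on the line of one `x`, with all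
coordinates of `x` and `y = T x` nonzero. Parametrise the tangent lines at `x` and `y` by `s` and let
`F_p`, `F_q` be the norms along them, so `F_q ≤ F_p` with equality at `s = 0`. Each satisfies
`F'' = Q F` with `Q = const * (A B) ^ (r - 2) / F ^ (2 r)`, where `A`, `B` are the linear factors. If
`F_q''(0) = F_p''(0)`, i.e. `Q_q(0) = Q_p(0)`, then the second derivative of `log Q_p - log Q_q` at
`0` is negative because `q < 2 < p`, so `Q_p < Q_q` on one side of `0`
(and this is immediate if `Q_q(0) > Q_p(0)`); the Wronskian of `F_p` and
`F_q` then has a strict sign there and `F_p < F_q`, which is absurd. Hence `F_q''(0) < F_p''(0)`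
(`second_order`). This strict inequality survives adding a small multiple of a rank-one `D` with
`D x = 0` (`perturb`), and away from `x` compactness applies (`exists_perturbation`), so `T ± t D` are
contractions for small `t > 0`.
-/

noncomputable section

/-- The ℓ^r norm on ℝ². -/
def pnorm (r : ℝ) (z : ℝ × ℝ) : ℝ := (|z.1| ^ r + |z.2| ^ r) ^ (1 / r)

/-- Apply a 2×2 real matrix, viewed as a linear operator ℝ² → ℝ², to a vector. -/
def app (A : Matrix (Fin 2) (Fin 2) ℝ) (z : ℝ × ℝ) : ℝ × ℝ :=
  (A 0 0 * z.1 + A 0 1 * z.2, A 1 0 * z.1 + A 1 1 * z.2)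

/-- Operator norm from ℓ^p_2 to ℓ^q_2. -/
def opNorm (p q : ℝ) (A : Matrix (Fin 2) (Fin 2) ℝ) : ℝ :=
  sSup {c : ℝ | ∃ z : ℝ × ℝ, pnorm p z = 1 ∧ c = pnorm q (app A z)}

/-- Closed unit ball of L(ℓ^p_2, ℓ^q_2). -/
def unitBall (p q : ℝ) : Set (Matrix (Fin 2) (Fin 2) ℝ) := {A | opNorm p q A ≤ 1}

/-- The rank-one operator u ⊗ v : z ↦ (u·z)·v. -/
def tensor (u v : ℝ × ℝ) : Matrix (Fin 2) (Fin 2) ℝ :=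
  !![v.1 * u.1, v.1 * u.2; v.2 * u.1, v.2 * u.2]

/-- Signed power of a vector: (sgn z1 |z1|^r, sgn z2 |z2|^r). -/
def spow (z : ℝ × ℝ) (r : ℝ) : ℝ × ℝ :=
  (Real.sign z.1 * |z.1| ^ r, Real.sign z.2 * |z.2| ^ r)

/-- Rotation: z^o = (−z2, z1). -/
def rot (z : ℝ × ℝ) : ℝ × ℝ := (-z.2, z.1)

open Filter Topology

/-! ### Weighted norms along a line and their second-order comparison -/

/-- The `r`-th power of the weighted ℓ^r norm of `(1 + a s, 1 + b s)` with weights `α, β`. The real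
power is the intended one only where both linear factors are positive, i.e. for `s` near `0`. -/
def ff (r α β a b s : ℝ) : ℝ := α * (1 + a * s) ^ r + β * (1 + b * s) ^ r
/-- The logarithm of the weighted ℓ^r norm `F = ff ^ (1 / r)`. -/
def LL (r α β a b s : ℝ) : ℝ := Real.log (ff r α β a b s) / r
/-- The logarithmic derivative `F' / F` of the weighted norm `F = exp LL`. -/
def psi (r α β a b s : ℝ) : ℝ :=
  (α * a * (1 + a * s) ^ (r - 1) + β * b * (1 + b * s) ^ (r - 1)) / ff r α β a b s
/-- The ratio `F'' / F` for the weighted norm `F = exp LL`: thus `F` solves `F'' = QQ * F`. -/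
def QQ (r α β a b s : ℝ) : ℝ :=
  (r - 1) * α * β * (a - b) ^ 2 * ((1 + a * s) ^ (r - 2) * (1 + b * s) ^ (r - 2)) /
    ff r α β a b s ^ 2
/-- The derivative of `log QQ`. -/
def SS (r α β a b s : ℝ) : ℝ :=
  (r - 2) * (a / (1 + a * s) + b / (1 + b * s)) - 2 * r * psi r α β a b s

lemma ff_pos {r α β a b s : ℝ} (hα : 0 < α) (hβ : 0 < β) (hA : 0 < 1 + a * s)
    (hB : 0 < 1 + b * s) : 0 < ff r α β a b s := by
  unfold ff; positivity

lemma hasDerivAt_lin_rpow (a r s : ℝ) (hA : 0 < 1 + a * s) :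
    HasDerivAt (fun s => (1 + a * s) ^ r) (r * a * (1 + a * s) ^ (r - 1)) s := by
  have h : HasDerivAt (fun s => 1 + a * s) a s := by
    simpa using ((hasDerivAt_id s).const_mul a).const_add 1
  refine HasDerivAt.congr_deriv (h.rpow_const (p := r) (Or.inl hA.ne')) ?_
  ring

lemma hasDerivAt_ff {r α β a b s : ℝ} (hA : 0 < 1 + a * s) (hB : 0 < 1 + b * s) :
    HasDerivAt (ff r α β a b)
      (r * (α * a * (1 + a * s) ^ (r - 1) + β * b * (1 + b * s) ^ (r - 1))) s := by
  unfold ff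
  refine HasDerivAt.congr_deriv (((hasDerivAt_lin_rpow a r s hA).const_mul α).add
    ((hasDerivAt_lin_rpow b r s hB).const_mul β)) ?_
  ring

lemma hasDerivAt_LL {r α β a b s : ℝ} (hr : 1 < r) (hα : 0 < α) (hβ : 0 < β)
    (hA : 0 < 1 + a * s) (hB : 0 < 1 + b * s) :
    HasDerivAt (LL r α β a b) (psi r α β a b s) s := by
  have hf := ff_pos (r := r) hα hβ hA hB
  unfold LL
  refine HasDerivAt.congr_deriv
    (((hasDerivAt_ff (α := α) (β := β) (r := r) hA hB).log hf.ne').div_const r) ?_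
  unfold psi
  field_simp

/-- Since `psi = F' / F`, this says `F'' = QQ * F`. -/
lemma hasDerivAt_psi {r α β a b s : ℝ} (hα : 0 < α) (hβ : 0 < β)
    (hA : 0 < 1 + a * s) (hB : 0 < 1 + b * s) :
    HasDerivAt (psi r α β a b) (QQ r α β a b s - psi r α β a b s ^ 2) s := by
  have hf := ff_pos (r := r) hα hβ hA hB
  have h1 : HasDerivAt (fun s => α * a * (1 + a * s) ^ (r - 1) + β * b * (1 + b * s) ^ (r - 1))
      ((r - 1) * (α * a ^ 2 * (1 + a * s) ^ (r - 2) + β * b ^ 2 * (1 + b * s) ^ (r - 2))) s := by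
    refine HasDerivAt.congr_deriv (((hasDerivAt_lin_rpow a (r - 1) s hA).const_mul (α * a)).add
      ((hasDerivAt_lin_rpow b (r - 1) s hB).const_mul (β * b))) ?_
    rw [show r - 1 - 1 = r - 2 by ring]
    ring
  unfold psi
  refine HasDerivAt.congr_deriv (h1.div (hasDerivAt_ff (α := α) (β := β) (r := r) hA hB) hf.ne') ?_
  unfold QQ
  have e1 : (1 + a * s) ^ (r - 1) = (1 + a * s) ^ (r - 2) * (1 + a * s) := by
    rw [← Real.rpow_add_one hA.ne']; ring_nf
  have e2 : (1 + b * s) ^ (r - 1) = (1 + b * s) ^ (r - 2) * (1 + b * s) := by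
    rw [← Real.rpow_add_one hB.ne']; ring_nf
  have e3 : ff r α β a b s = α * ((1 + a * s) ^ (r - 2) * (1 + a * s) ^ 2)
      + β * ((1 + b * s) ^ (r - 2) * (1 + b * s) ^ 2) := by
    unfold ff
    rw [← Real.rpow_natCast, ← Real.rpow_natCast, ← Real.rpow_add hA, ← Real.rpow_add hB]
    norm_num
  rw [e1, e2]
  field_simp
  rw [e3]
  ring_nf

lemma QQ_pos {r α β a b s : ℝ} (hr : 1 < r) (hα : 0 < α) (hβ : 0 < β) (hab : a ≠ b)
    (hA : 0 < 1 + a * s) (hB : 0 < 1 + b * s) : 0 < QQ r α β a b s := by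
  have hf := ff_pos (r := r) hα hβ hA hB
  have : 0 < (a - b) ^ 2 := by have := sub_ne_zero.2 hab; positivity
  have : 0 < r - 1 := by linarith
  unfold QQ
  positivity

lemma hasDerivAt_log_QQ {r α β a b s : ℝ} (hr : 1 < r) (hα : 0 < α) (hβ : 0 < β) (hab : a ≠ b)
    (hA : 0 < 1 + a * s) (hB : 0 < 1 + b * s) :
    HasDerivAt (fun s => Real.log (QQ r α β a b s)) (SS r α β a b s) s := by
  have hf := ff_pos (r := r) hα hβ hA hB
  have hc : (r - 1) * α * β * (a - b) ^ 2 ≠ 0 := by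
    have h1 : a - b ≠ 0 := sub_ne_zero.2 hab
    have h2 : r - 1 ≠ 0 := by linarith
    positivity
  have hlin : ∀ a : ℝ, 0 < 1 + a * s →
      HasDerivAt (fun s => Real.log (1 + a * s)) (a / (1 + a * s)) s := by
    intro a ha
    have h : HasDerivAt (fun s => 1 + a * s) a s := by
      simpa using ((hasDerivAt_id s).const_mul a).const_add 1
    exact h.log ha.ne'
  have hd := ((((hlin a hA).add (hlin b hB)).const_mul (r - 2)).sub
    (((hasDerivAt_LL (a := a) (b := b) hr hα hβ hA hB).const_mul (2 * r)))).const_add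
      (Real.log ((r - 1) * α * β * (a - b) ^ 2))
  have hev : ∀ a : ℝ, 0 < 1 + a * s → ∀ᶠ s in 𝓝 s, 0 < 1 + a * s := by
    intro a ha
    have : ContinuousAt (fun s : ℝ => 1 + a * s) s := by fun_prop
    exact this.eventually (lt_mem_nhds ha)
  refine HasDerivAt.congr_of_eventuallyEq hd ?_
  filter_upwards [hev a hA, hev b hB] with s hA hB
  have hf := ff_pos (r := r) hα hβ hA hB
  simp only [Pi.add_apply, Pi.sub_apply, LL, QQ]
  rw [Real.log_div (mul_ne_zero hc (by positivity)) (by positivity), Real.log_mul hc (by positivity),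
    Real.log_mul (x := (1 + a * s) ^ (r - 2)) (by positivity) (by positivity), Real.log_rpow hA,
    Real.log_rpow hB, Real.log_pow]
  have : r ≠ 0 := by linarith
  field_simp
  push_cast
  ring

/-- The term `-(r - 2) * (a ^ 2 + b ^ 2)` is negative for `r > 2` and positive for `r < 2` (unless
`a = b = 0`); this is what separates the two exponents `q < 2 < p` in `second_order_aux`. -/
lemma hasDerivAt_SS {r α β a b : ℝ} (hα : 0 < α) (hβ : 0 < β) :
    HasDerivAt (SS r α β a b) (-(r - 2) * (a ^ 2 + b ^ 2)
      - 2 * r * (QQ r α β a b 0 - psi r α β a b 0 ^ 2)) 0 := by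
  have hl : ∀ a : ℝ, HasDerivAt (fun s => a / (1 + a * s)) (- a ^ 2) 0 := by
    intro a
    have h : HasDerivAt (fun s => 1 + a * s) a 0 := by
      simpa using ((hasDerivAt_id (0 : ℝ)).const_mul a).const_add 1
    refine HasDerivAt.congr_deriv ((hasDerivAt_const (0 : ℝ) a).div h (by simp)) ?_
    simp; ring
  have h1 := (((hl a).add (hl b)).const_mul (r - 2)).sub
    ((hasDerivAt_psi (r := r) (a := a) (b := b) (s := 0) hα hβ (by simp) (by simp)).const_mul (2 * r))
  unfold SS
  refine HasDerivAt.congr_deriv (h1) ?_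
  ring

lemma ff_zero {r α β a b : ℝ} (h : α + β = 1) : ff r α β a b 0 = 1 := by simp [ff, h]
lemma LL_zero {r α β a b : ℝ} (h : α + β = 1) : LL r α β a b 0 = 0 := by simp [LL, ff_zero h]
lemma psi_zero {r α β a b : ℝ} (h : α + β = 1) : psi r α β a b 0 = α * a + β * b := by
  simp [psi, ff_zero h]
lemma QQ_zero {r α β a b : ℝ} (h : α + β = 1) :
    QQ r α β a b 0 = (r - 1) * α * β * (a - b) ^ 2 := by simp [QQ, ff_zero h]
lemma SS_zero {r α β a b : ℝ} (h : α + β = 1) (h' : α * a + β * b = 0) :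
    SS r α β a b 0 = (r - 2) * (a + b) := by simp [SS, psi_zero h, h']

lemma eventually_lin_pos (a : ℝ) : ∀ᶠ s in 𝓝 (0 : ℝ), 0 < 1 + a * s := by
  have : ContinuousAt (fun s : ℝ => 1 + a * s) 0 := by fun_prop
  exact this.eventually (lt_mem_nhds (by simp))

/-- A function that is continuous at `0` and has negative derivative just to the right of `0` stays
below its value at `0` there. -/
lemma eventually_lt_of_deriv_neg {h h' : ℝ → ℝ} (hc : ContinuousAt h 0)
    (hd : ∀ᶠ s in 𝓝[>] (0 : ℝ), HasDerivAt h (h' s) s)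
    (hn : ∀ᶠ s in 𝓝[>] (0 : ℝ), h' s < 0) : ∀ᶠ s in 𝓝[>] (0 : ℝ), h s < h 0 := by
  obtain ⟨ε, hε, H⟩ := mem_nhdsGT_iff_exists_Ioo_subset.1 (hd.and hn)
  refine mem_nhdsGT_iff_exists_Ioo_subset.2 ⟨ε, hε, fun s hs => ?_⟩
  have hs' : ∀ x ∈ Set.Ioc 0 s, x ∈ Set.Ioo 0 ε := fun x hx => ⟨hx.1, hx.2.trans_lt hs.2⟩
  have : StrictAntiOn h (Set.Icc 0 s) := by
    refine strictAntiOn_of_deriv_neg (convex_Icc _ _) (fun x hx => ?_) (fun x hx => ?_)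
    · rcases hx.1.eq_or_lt with h0 | h0
      · rw [← h0]; exact hc.continuousWithinAt
      · exact (H (hs' x ⟨h0, hx.2⟩)).1.continuousAt.continuousWithinAt
    · rw [interior_Icc] at hx
      have := H (hs' x ⟨hx.1, hx.2.le⟩)
      rw [this.1.deriv]; exact this.2
  exact this ⟨le_rfl, hs.1.le⟩ ⟨hs.1.le, le_rfl⟩ hs.1

/-- A differentiable function that is nonpositive at `0`, and decreasing there in case it vanishes,
is negative just to the right of `0`. -/
lemma eventually_neg_of_deriv {h : ℝ → ℝ} {m : ℝ} (hd : HasDerivAt h m 0) (h0 : h 0 ≤ 0)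
    (hm : h 0 = 0 → m < 0) : ∀ᶠ s in 𝓝[>] (0 : ℝ), h s < 0 := by
  rcases h0.lt_or_eq with h0 | h0
  · exact nhdsWithin_le_nhds (hd.continuousAt.eventually (gt_mem_nhds h0))
  · have hm := hm h0
    have := (hasDerivAt_iff_tendsto_slope.1 hd).mono_left
      (nhdsWithin_mono 0 (fun x (hx : 0 < x) => hx.ne'))
    filter_upwards [this.eventually (gt_mem_nhds hm), self_mem_nhdsWithin] with s hs hs0
    have hs0 : 0 < s := hs0
    rw [slope_def_field, h0, sub_zero, sub_zero, div_neg_iff] at hs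
    rcases hs with hs | hs <;> linarith [hs.1, hs.2]

/-- The strict second-order inequality, under a sign condition on the third-order terms which can be
arranged by the reflection `s ↦ -s`. If `QQ p ≤ QQ q` at `0`, then comparing logarithmic
derivatives gives `QQ p < QQ q` just to the right of `0`. As both norms `F` solve `F'' = QQ * F`,
their Wronskian is then strictly decreasing from `0`, so that `LL p < LL q` to the right of `0`,
against `hL`. -/
lemma second_order_aux {p q α β γ δ a b c d : ℝ} (hq1 : 1 < q) (hq2 : q < 2) (hp : 2 < p)
    (hα : 0 < α) (hβ : 0 < β) (hγ : 0 < γ) (hδ : 0 < δ) (hαβ : α + β = 1) (hγδ : γ + δ = 1)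
    (h1 : α * a + β * b = 0) (h2 : γ * c + δ * d = 0) (hab : a ≠ b) (hcd : c ≠ d)
    (hL : ∀ᶠ s in 𝓝 (0 : ℝ), LL q γ δ c d s ≤ LL p α β a b s)
    (hS : (p - 2) * (a + b) - (q - 2) * (c + d) ≤ 0) :
    (q - 1) * γ * δ * (c - d) ^ 2 < (p - 1) * α * β * (a - b) ^ 2 := by
  by_contra! hcon
  have hp1 : 1 < p := by linarith
  have hev : ∀ᶠ s in 𝓝 (0 : ℝ), 0 < 1 + a * s ∧ 0 < 1 + b * s ∧ 0 < 1 + c * s ∧ 0 < 1 + d * s := by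
    filter_upwards [eventually_lin_pos a, eventually_lin_pos b, eventually_lin_pos c,
      eventually_lin_pos d] with s h1 h2 h3 h4 using ⟨h1, h2, h3, h4⟩
  have hev0 := hev.self_of_nhds
  have hev' : ∀ᶠ s in 𝓝[>] (0 : ℝ), 0 < 1 + a * s ∧ 0 < 1 + b * s ∧ 0 < 1 + c * s ∧ 0 < 1 + d * s :=
    nhdsWithin_le_nhds hev
  have hlogd : ∀ s, (0 < 1 + a * s ∧ 0 < 1 + b * s ∧ 0 < 1 + c * s ∧ 0 < 1 + d * s) →
      HasDerivAt (fun s => Real.log (QQ p α β a b s) - Real.log (QQ q γ δ c d s))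
        (SS p α β a b s - SS q γ δ c d s) s := fun s hs =>
    (hasDerivAt_log_QQ hp1 hα hβ hab hs.1 hs.2.1).sub
      (hasDerivAt_log_QQ hq1 hγ hδ hcd hs.2.2.1 hs.2.2.2)
  have hQp := QQ_pos hp1 hα hβ hab hev0.1 hev0.2.1
  have hQq := QQ_pos hq1 hγ hδ hcd hev0.2.2.1 hev0.2.2.2
  have hQ0 : QQ p α β a b 0 ≤ QQ q γ δ c d 0 := by rwa [QQ_zero hαβ, QQ_zero hγδ]
  -- `Q_p < Q_q` immediately to the right of `0`
  have hρ : ∀ᶠ s in 𝓝[>] (0 : ℝ),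
      Real.log (QQ p α β a b s) - Real.log (QQ q γ δ c d s) < 0 := by
    rcases hQ0.lt_or_eq with hlt | heq
    · have := Real.log_lt_log hQp hlt
      exact nhdsWithin_le_nhds ((hlogd 0 hev0).continuousAt.eventually
        (gt_mem_nhds (by linarith)))
    · have hSd := (hasDerivAt_SS (r := p) (a := a) (b := b) hα hβ).sub
        (hasDerivAt_SS (r := q) (a := c) (b := d) hγ hδ)
      have hSneg : ∀ᶠ s in 𝓝[>] (0 : ℝ), SS p α β a b s - SS q γ δ c d s < 0 := by
        refine eventually_neg_of_deriv hSd ?_ ?_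
        · show SS p α β a b 0 - SS q γ δ c d 0 ≤ 0
          rw [SS_zero hαβ h1, SS_zero hγδ h2]; exact hS
        · intro _
          rw [psi_zero hαβ, psi_zero hγδ, h1, h2, heq]
          have t1 : 0 < a ^ 2 + b ^ 2 := by
            by_contra! hh
            have ha : a = 0 := by nlinarith [sq_nonneg a, sq_nonneg b]
            have hb : b = 0 := by nlinarith [sq_nonneg a, sq_nonneg b]
            exact hab (ha.trans hb.symm)
          have t2 : 0 < (p - 2) * (a ^ 2 + b ^ 2) := mul_pos (by linarith) t1
          have t3 : 0 ≤ (2 - q) * (c ^ 2 + d ^ 2) := mul_nonneg (by linarith) (by positivity)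
          have t4 : 0 < (p - q) * QQ q γ δ c d 0 := mul_pos (by linarith) hQq
          linarith
      have := eventually_lt_of_deriv_neg (hlogd 0 hev0).continuousAt
        (hev'.mono hlogd) hSneg
      filter_upwards [this] with s hs
      rw [heq, sub_self] at hs
      exact hs
  -- with `F = exp LL`, this is the Wronskian `F_p' F_q - F_p F_q'`
  have hE : ∀ᶠ s in 𝓝[>] (0 : ℝ), (psi p α β a b s - psi q γ δ c d s) *
      Real.exp (LL p α β a b s + LL q γ δ c d s) < 0 := by
    have hd : ∀ s, (0 < 1 + a * s ∧ 0 < 1 + b * s ∧ 0 < 1 + c * s ∧ 0 < 1 + d * s) →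
      HasDerivAt (fun s => (psi p α β a b s - psi q γ δ c d s) *
        Real.exp (LL p α β a b s + LL q γ δ c d s))
        ((QQ p α β a b s - QQ q γ δ c d s) * Real.exp (LL p α β a b s + LL q γ δ c d s)) s := by
      intro s hs
      refine HasDerivAt.congr_deriv (((hasDerivAt_psi (r := p) hα hβ hs.1 hs.2.1).sub
        (hasDerivAt_psi (r := q) hγ hδ hs.2.2.1 hs.2.2.2)).mul
        ((hasDerivAt_LL hp1 hα hβ hs.1 hs.2.1).add
          (hasDerivAt_LL hq1 hγ hδ hs.2.2.1 hs.2.2.2)).exp) ?_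
      simp only [Pi.sub_apply, Pi.add_apply]
      ring
    have := eventually_lt_of_deriv_neg (hd 0 hev0).continuousAt (hev'.mono hd) (by
      filter_upwards [hρ, hev'] with s hs hs'
      have := (Real.log_lt_log_iff (QQ_pos hp1 hα hβ hab hs'.1 hs'.2.1)
        (QQ_pos hq1 hγ hδ hcd hs'.2.2.1 hs'.2.2.2)).1 (by linarith)
      exact mul_neg_of_neg_of_pos (by linarith) (Real.exp_pos _))
    filter_upwards [this] with s hs
    rw [psi_zero hαβ, psi_zero hγδ, h1, h2, sub_self, zero_mul] at hs
    exact hs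
  have hd : ∀ s, (0 < 1 + a * s ∧ 0 < 1 + b * s ∧ 0 < 1 + c * s ∧ 0 < 1 + d * s) →
      HasDerivAt (fun s => LL p α β a b s - LL q γ δ c d s)
        (psi p α β a b s - psi q γ δ c d s) s := fun s hs =>
    (hasDerivAt_LL hp1 hα hβ hs.1 hs.2.1).sub (hasDerivAt_LL hq1 hγ hδ hs.2.2.1 hs.2.2.2)
  have := eventually_lt_of_deriv_neg (hd 0 hev0).continuousAt (hev'.mono hd)
    (hE.mono fun s hs => neg_of_mul_neg_left hs (Real.exp_pos _).le)
  have hL' : ∀ᶠ s in 𝓝[>] (0 : ℝ), LL q γ δ c d s ≤ LL p α β a b s := nhdsWithin_le_nhds hL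
  obtain ⟨s, hs, hs'⟩ := (this.and hL').exists
  rw [LL_zero hαβ, LL_zero hγδ] at hs
  linarith

lemma LL_neg (r α β a b s : ℝ) : LL r α β (-a) (-b) s = LL r α β a b (-s) := by
  simp [LL, ff]

/-- At a point where the weighted ℓ^q norm of a line touches the weighted ℓ^p norm of a line from
below, the second-order inequality is strict as soon as `q < 2 < p`. -/
lemma second_order {p q α β γ δ a b c d : ℝ} (hq1 : 1 < q) (hq2 : q < 2) (hp : 2 < p)
    (hα : 0 < α) (hβ : 0 < β) (hγ : 0 < γ) (hδ : 0 < δ) (hαβ : α + β = 1) (hγδ : γ + δ = 1)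
    (h1 : α * a + β * b = 0) (h2 : γ * c + δ * d = 0) (hab : a ≠ b)
    (hL : ∀ᶠ s in 𝓝 (0 : ℝ), LL q γ δ c d s ≤ LL p α β a b s) :
    (q - 1) * γ * δ * (c - d) ^ 2 < (p - 1) * α * β * (a - b) ^ 2 := by
  by_cases hcd : c = d
  · have : 0 < (a - b) ^ 2 := by have := sub_ne_zero.2 hab; positivity
    have : 0 < p - 1 := by linarith
    rw [hcd, sub_self]
    simp only [ne_eq, OfNat.ofNat_ne_zero, not_false_eq_true, zero_pow, mul_zero]
    positivity
  rcases le_total ((p - 2) * (a + b) - (q - 2) * (c + d)) 0 with hS | hS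
  · exact second_order_aux hq1 hq2 hp hα hβ hγ hδ hαβ hγδ h1 h2 hab hcd hL hS
  · have := second_order_aux (a := -a) (b := -b) (c := -c) (d := -d) hq1 hq2 hp hα hβ hγ hδ hαβ hγδ
      (by linarith) (by linarith) (by simpa using hab) (by simpa using hcd)
      (by
        simp only [LL_neg]
        have ht : Tendsto (fun s : ℝ => -s) (𝓝 0) (𝓝 0) := by
          simpa using (continuous_neg (G := ℝ)).tendsto 0
        exact ht.eventually hL) (by linarith)
    rw [show -c - -d = -(c - d) by ring, show -a - -b = -(a - b) by ring, neg_sq, neg_sq] at this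
    exact this

lemma first_order {p q α β γ δ a b c d : ℝ} (hq1 : 1 < q) (hp : 1 < p)
    (hα : 0 < α) (hβ : 0 < β) (hγ : 0 < γ) (hδ : 0 < δ) (hαβ : α + β = 1) (hγδ : γ + δ = 1)
    (hL : ∀ᶠ s in 𝓝 (0 : ℝ), LL q γ δ c d s ≤ LL p α β a b s) :
    γ * c + δ * d = α * a + β * b := by
  have hd := (hasDerivAt_LL (s := 0) (a := a) (b := b) hp hα hβ (by simp) (by simp)).sub
    (hasDerivAt_LL (s := 0) (a := c) (b := d) hq1 hγ hδ (by simp) (by simp))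
  have hm : IsLocalMin (LL p α β a b - LL q γ δ c d) 0 := by
    filter_upwards [hL] with s hs
    simp only [Pi.sub_apply, LL_zero hαβ, LL_zero hγδ]
    linarith
  have := hm.hasDerivAt_eq_zero hd
  rw [psi_zero hαβ, psi_zero hγδ] at this
  linarith

lemma eventually_ge_of_deriv2 {h h' : ℝ → ℝ} {m : ℝ} (hd : ∀ᶠ s in 𝓝 (0 : ℝ), HasDerivAt h (h' s) s)
    (h0 : h' 0 = 0) (hd2 : HasDerivAt h' m 0) (hm : 0 < m) : ∀ᶠ s in 𝓝 (0 : ℝ), h 0 ≤ h s := by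
  have e : deriv h =ᶠ[𝓝 0] h' := hd.mono fun s hs => hs.deriv
  refine isLocalMin_of_deriv_deriv_pos ?_ ?_ hd.self_of_nhds.continuousAt
  · rw [e.deriv_eq, hd2.deriv]; exact hm
  · rw [e.eq_of_nhds, h0]

/-- Taylor bound from the second derivative of `LL` at `0`, which is `(r - 1) α β (a - b)²`. -/
lemma LL_lower {r α β a b m : ℝ} (hr : 1 < r) (hα : 0 < α) (hβ : 0 < β) (hαβ : α + β = 1)
    (h1 : α * a + β * b = 0) (hm : m < (r - 1) * α * β * (a - b) ^ 2) :
    ∀ᶠ s in 𝓝 (0 : ℝ), m / 2 * s ^ 2 ≤ LL r α β a b s := by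
  have := eventually_ge_of_deriv2 (h := fun s => LL r α β a b s - m / 2 * s ^ 2)
    (h' := fun s => psi r α β a b s - m * s) (m := (r - 1) * α * β * (a - b) ^ 2 - m) (by
      filter_upwards [eventually_lin_pos a, eventually_lin_pos b] with s hA hB
      refine HasDerivAt.congr_deriv ((hasDerivAt_LL hr hα hβ hA hB).sub
        ((hasDerivAt_pow 2 s).const_mul (m / 2))) ?_
      simp; ring) (by simp [psi_zero hαβ, h1]) (by
      refine HasDerivAt.congr_deriv ((hasDerivAt_psi (r := r) (a := a) (b := b) (s := 0) hα hβ (by simp) (by simp)).sub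
        ((hasDerivAt_id (0 : ℝ)).const_mul m)) ?_
      rw [psi_zero hαβ, QQ_zero hαβ, h1]; ring) (by linarith)
  filter_upwards [this] with s hs
  rw [LL_zero hαβ] at hs
  linarith

lemma LL_upper {r α β a b m : ℝ} (hr : 1 < r) (hα : 0 < α) (hβ : 0 < β) (hαβ : α + β = 1)
    (h1 : α * a + β * b = 0) (hm : (r - 1) * α * β * (a - b) ^ 2 < m) :
    ∀ᶠ s in 𝓝 (0 : ℝ), LL r α β a b s ≤ m / 2 * s ^ 2 := by
  have := eventually_ge_of_deriv2 (h := fun s => m / 2 * s ^ 2 - LL r α β a b s)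
    (h' := fun s => m * s - psi r α β a b s) (m := m - (r - 1) * α * β * (a - b) ^ 2) (by
      filter_upwards [eventually_lin_pos a, eventually_lin_pos b] with s hA hB
      refine HasDerivAt.congr_deriv (((hasDerivAt_pow 2 s).const_mul (m / 2)).sub
        (hasDerivAt_LL hr hα hβ hA hB)) ?_
      simp; ring) (by simp [psi_zero hαβ, h1]) (by
      refine HasDerivAt.congr_deriv (((hasDerivAt_id (0 : ℝ)).const_mul m).sub
        (hasDerivAt_psi (r := r) (a := a) (b := b) (s := 0) hα hβ (by simp) (by simp))) ?_
      rw [psi_zero hαβ, QQ_zero hαβ, h1]; ring) (by linarith)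
  filter_upwards [this] with s hs
  rw [LL_zero hαβ] at hs
  linarith

/-- A strict second-order inequality is stable: the comparison of norms persists, uniformly near
`s = u.1 = 0`, after the slope `κ` of the line in ℓ^q is perturbed by `u.2`. -/
lemma perturb {p q α β γ δ a b κ : ℝ} (hq1 : 1 < q) (hp : 1 < p)
    (hα : 0 < α) (hβ : 0 < β) (hγ : 0 < γ) (hδ : 0 < δ) (hαβ : α + β = 1) (hγδ : γ + δ = 1)
    (h1 : α * a + β * b = 0)
    (hlt : (q - 1) * γ * δ * κ ^ 2 < (p - 1) * α * β * (a - b) ^ 2) :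
    ∀ᶠ u : ℝ × ℝ in 𝓝 ((0 : ℝ), (0 : ℝ)),
      LL q γ δ (-δ * (κ + u.2)) (γ * (κ + u.2)) u.1 ≤ LL p α β a b u.1 := by
  set B := (q - 1) * γ * δ with hB
  set A := (p - 1) * α * β * (a - b) ^ 2 with hA
  set η := (A - B * κ ^ 2) / (2 * (κ ^ 2 + 1)) with hη
  have hk : 0 < κ ^ 2 + 1 := by positivity
  have hηpos : 0 < η := div_pos (by linarith) (by positivity)
  have hη2 : η * (2 * (κ ^ 2 + 1)) = A - B * κ ^ 2 := by rw [hη]; field_simp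
  have hlow := LL_lower (m := A - η) hp hα hβ hαβ h1 (by linarith)
  have hup := LL_upper (a := -δ) (b := γ) (m := B + η) hq1 hγ hδ hγδ (by ring) (by
    have : (-δ - γ) ^ 2 = 1 := by rw [show -δ - γ = -(γ + δ) by ring, hγδ]; norm_num
    rw [this]; linarith)
  have c1 : Tendsto (fun u : ℝ × ℝ => u.1) (𝓝 (0, 0)) (𝓝 0) := continuous_fst.tendsto _
  have c2 : Tendsto (fun u : ℝ × ℝ => (κ + u.2) * u.1) (𝓝 (0, 0)) (𝓝 0) := by
    have : Continuous (fun u : ℝ × ℝ => (κ + u.2) * u.1) := by fun_prop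
    simpa using this.tendsto (0, 0)
  have c3 : ∀ᶠ u : ℝ × ℝ in 𝓝 ((0 : ℝ), (0 : ℝ)), (B + η) * (κ + u.2) ^ 2 < A - η := by
    have : Continuous (fun u : ℝ × ℝ => (B + η) * (κ + u.2) ^ 2) := by fun_prop
    refine (this.tendsto (0, 0)).eventually (gt_mem_nhds ?_)
    simp only [add_zero]
    nlinarith
  filter_upwards [c1.eventually hlow, c2.eventually hup, c3] with u h1 h2 h3
  have e : LL q γ δ (-δ * (κ + u.2)) (γ * (κ + u.2)) u.1 = LL q γ δ (-δ) γ ((κ + u.2) * u.1) := by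
    simp only [LL, ff, mul_assoc]
  rw [e]
  refine h2.trans (le_trans ?_ h1)
  nlinarith [mul_nonneg (sub_nonneg.2 h3.le) (sq_nonneg u.1)]

/-! ### Quadratic bounds for powers of the absolute value -/

/-- Monotonicity of an odd function need only be checked on the nonnegative side. -/
lemma monotoneOn_of_odd {g : ℝ → ℝ} {M : ℝ} (hodd : ∀ t, g (-t) = -g t)
    (hg : MonotoneOn g (Set.Icc 0 M)) : MonotoneOn g (Set.Icc (-M) M) := by
  intro u hu v hv huv
  have h0 : g 0 = 0 := by have := hodd 0; simp at this; linarith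
  rcases le_total 0 u with h | h
  · exact hg ⟨h, hu.2⟩ ⟨h.trans huv, hv.2⟩ huv
  · have h1 : 0 ≤ g (-u) := by
      have := hg (a := 0) (b := -u) ⟨le_rfl, by linarith [hu.1]⟩ ⟨by linarith, by linarith [hu.1]⟩ (by linarith)
      linarith
    rcases le_total 0 v with h' | h'
    · have h2 : 0 ≤ g v := by
        have := hg (a := 0) (b := v) ⟨le_rfl, by linarith [hv.2]⟩ ⟨h', hv.2⟩ h'
        linarith
      have := hodd u
      linarith
    · have := hg (a := -v) (b := -u) ⟨by linarith, by linarith [hv.1]⟩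
        ⟨by linarith, by linarith [hu.1]⟩ (by linarith)
      rw [hodd, hodd] at this
      linarith

/-- A differentiable function with derivative monotone on `[-M, M]` lies above its tangents there. -/
lemma tangent_le {k k' : ℝ → ℝ} {M y u : ℝ} (hk : ∀ t, HasDerivAt k (k' t) t)
    (hm : MonotoneOn k' (Set.Icc (-M) M)) (hy : y ∈ Set.Icc (-M) M) (hu : u ∈ Set.Icc (-M) M) :
    k y + k' y * (u - y) ≤ k u := by
  rcases lt_trichotomy y u with h | h | h
  · obtain ⟨ξ, hξ, e⟩ := exists_hasDerivAt_eq_slope k k' h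
      (fun t _ => (hk t).continuousAt.continuousWithinAt) (fun t _ => hk t)
    have := hm hy ⟨hy.1.trans hξ.1.le, hξ.2.le.trans hu.2⟩ hξ.1.le
    rw [e, le_div_iff₀ (by linarith)] at this
    linarith
  · subst h; simp
  · obtain ⟨ξ, hξ, e⟩ := exists_hasDerivAt_eq_slope k k' h
      (fun t _ => (hk t).continuousAt.continuousWithinAt) (fun t _ => hk t)
    have := hm ⟨hu.1.trans hξ.1.le, hξ.2.le.trans hy.2⟩ hy hξ.2.le
    rw [e, div_le_iff₀ (by linarith)] at this
    linarith

lemma abs_rpow_mul_self {r t : ℝ} (hr : 1 < r) (ht : 0 ≤ t) : |t| ^ (r - 2) * t = t ^ (r - 1) := by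
  rcases ht.eq_or_lt with h | h
  · rw [← h, Real.zero_rpow (by linarith), mul_zero]
  · rw [abs_of_pos h, ← Real.rpow_add_one h.ne']; ring_nf

lemma hasDerivAt_rpow_sub {r C t : ℝ} (ht : 0 < t) :
    HasDerivAt (fun t : ℝ => t ^ (r - 1) - C * t) ((r - 1) * t ^ (r - 2) - C) t := by
  refine HasDerivAt.congr_deriv ((Real.hasDerivAt_rpow_const (p := r - 1) (Or.inl ht.ne')).sub
    ((hasDerivAt_id t).const_mul C)) ?_
  rw [show r - 1 - 1 = r - 2 by ring, mul_one]

/-- For `1 < q < 2` the function `|·| ^ q` is uniformly convex on bounded sets. The range `|y| ≤ 1`,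
`|h| ≤ 2` keeps `y + h` in `[-3, 3]`. -/
lemma abs_rpow_lower {q : ℝ} (hq1 : 1 < q) (hq2 : q < 2) : ∃ c > 0, ∀ y h : ℝ, |y| ≤ 1 → |h| ≤ 2 →
    |y| ^ q + q * (|y| ^ (q - 2) * y) * h + c * h ^ 2 ≤ |y + h| ^ q := by
  set c : ℝ := (q - 1) * 3 ^ (q - 2) with hc
  have hcpos : 0 < c := mul_pos (by linarith) (by positivity)
  have hmon : MonotoneOn (fun t : ℝ => |t| ^ (q - 2) * t - c * t) (Set.Icc (-3) 3) := by
    refine monotoneOn_of_odd (fun t => by rw [abs_neg]; ring) ?_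
    have : MonotoneOn (fun t : ℝ => t ^ (q - 1) - c * t) (Set.Icc 0 3) := by
      refine monotoneOn_of_deriv_nonneg (convex_Icc _ _) ?_ ?_ ?_
      · exact ((Real.continuous_rpow_const (by linarith)).sub
          (continuous_const.mul continuous_id)).continuousOn
      · rw [interior_Icc]
        exact fun t ht => (hasDerivAt_rpow_sub ht.1).differentiableAt.differentiableWithinAt
      · rw [interior_Icc]
        intro t ht
        rw [(hasDerivAt_rpow_sub ht.1).deriv, hc]
        have := Real.rpow_le_rpow_of_nonpos ht.1 ht.2.le (by linarith : q - 2 ≤ 0)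
        have := mul_le_mul_of_nonneg_left this (by linarith : 0 ≤ q - 1)
        linarith
    exact this.congr fun t ht => by simp only [abs_rpow_mul_self hq1 ht.1]
  refine ⟨c * q / 2, by positivity, fun y h hy hh => ?_⟩
  have hd : ∀ t : ℝ, HasDerivAt (fun t : ℝ => |t| ^ q - c * q / 2 * t ^ 2)
      (q * (|t| ^ (q - 2) * t - c * t)) t := fun t => by
    refine HasDerivAt.congr_deriv ((hasDerivAt_abs_rpow t hq1).sub
      ((hasDerivAt_pow 2 t).const_mul (c * q / 2))) ?_
    simp; ring
  rw [abs_le] at hy hh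
  have := tangent_le (y := y) (u := y + h) hd (M := 3)
    (fun u hu v hv huv => mul_le_mul_of_nonneg_left (hmon hu hv huv) (by linarith))
    ⟨by linarith, by linarith⟩ ⟨by linarith, by linarith⟩
  linarith

/-- For `p > 2` the function `|·| ^ p` has bounded second derivative on bounded sets, hence a quadratic
upper Taylor bound. -/
lemma abs_rpow_upper {p : ℝ} (hp : 2 < p) : ∃ C > 0, ∀ y h : ℝ, |y| ≤ 1 → |h| ≤ 2 →
    |y + h| ^ p ≤ |y| ^ p + p * (|y| ^ (p - 2) * y) * h + C * h ^ 2 := by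
  set c : ℝ := (p - 1) * 3 ^ (p - 2) with hc
  have hcpos : 0 < c := mul_pos (by linarith) (by positivity)
  have hp1 : 1 < p := by linarith
  have hmon : MonotoneOn (fun t : ℝ => -(|t| ^ (p - 2) * t - c * t)) (Set.Icc (-3) 3) := by
    refine monotoneOn_of_odd (fun t => by rw [abs_neg]; ring) ?_
    have : AntitoneOn (fun t : ℝ => t ^ (p - 1) - c * t) (Set.Icc 0 3) := by
      refine antitoneOn_of_deriv_nonpos (convex_Icc _ _) ?_ ?_ ?_
      · exact ((Real.continuous_rpow_const (by linarith)).sub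
          (continuous_const.mul continuous_id)).continuousOn
      · rw [interior_Icc]
        exact fun t ht => (hasDerivAt_rpow_sub ht.1).differentiableAt.differentiableWithinAt
      · rw [interior_Icc]
        intro t ht
        rw [(hasDerivAt_rpow_sub ht.1).deriv, hc]
        have := Real.rpow_le_rpow ht.1.le ht.2.le (by linarith : 0 ≤ p - 2)
        have := mul_le_mul_of_nonneg_left this (by linarith : 0 ≤ p - 1)
        linarith
    exact this.neg.congr fun t ht => by simp only [abs_rpow_mul_self hp1 ht.1]
  refine ⟨c * p / 2, by positivity, fun y h hy hh => ?_⟩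
  have hd : ∀ t : ℝ, HasDerivAt (fun t : ℝ => c * p / 2 * t ^ 2 - |t| ^ p)
      (p * -(|t| ^ (p - 2) * t - c * t)) t := fun t => by
    refine HasDerivAt.congr_deriv (((hasDerivAt_pow 2 t).const_mul (c * p / 2)).sub
      (hasDerivAt_abs_rpow t hp1)) ?_
    simp; ring
  rw [abs_le] at hy hh
  have := tangent_le (y := y) (u := y + h) hd (M := 3)
    (fun u hu v hv huv => mul_le_mul_of_nonneg_left (hmon hu hv huv) (by linarith))
    ⟨by linarith, by linarith⟩ ⟨by linarith, by linarith⟩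
  linarith

/-! ### Norms, contractions and rigidity -/

lemma rpow_eq_one_iff' {a r : ℝ} (ha : 0 ≤ a) (hr : r ≠ 0) : a ^ r = 1 ↔ a = 1 := by
  constructor
  · intro h
    exact (Real.rpow_left_inj ha zero_le_one hr).1 (by rw [h, Real.one_rpow])
  · rintro rfl; exact Real.one_rpow r

lemma pnorm_nonneg (r : ℝ) (z : ℝ × ℝ) : 0 ≤ pnorm r z := by unfold pnorm; positivity

lemma pnorm_rpow {r : ℝ} (hr : 0 < r) (z : ℝ × ℝ) : pnorm r z ^ r = |z.1| ^ r + |z.2| ^ r := by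
  unfold pnorm
  rw [← Real.rpow_mul (by positivity), one_div_mul_cancel hr.ne', Real.rpow_one]

lemma pnorm_eq_one_iff {r : ℝ} (hr : 0 < r) (z : ℝ × ℝ) :
    pnorm r z = 1 ↔ |z.1| ^ r + |z.2| ^ r = 1 := by
  rw [← pnorm_rpow hr, rpow_eq_one_iff' (pnorm_nonneg _ _) hr.ne']

lemma continuous_pnorm {r : ℝ} (hr : 0 < r) : Continuous (pnorm r) := by
  unfold pnorm
  have h : ∀ s : ℝ, 0 < s → Continuous (fun t : ℝ => t ^ s) := fun s hs =>
    Real.continuous_rpow_const hs.le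
  have h1 := h r hr
  have h2 := h (1 / r) (by positivity)
  exact h2.comp ((h1.comp (continuous_abs.comp continuous_fst)).add
    (h1.comp (continuous_abs.comp continuous_snd)))

lemma pnorm_smul {r : ℝ} (hr : 0 < r) (c : ℝ) (z : ℝ × ℝ) : pnorm r (c • z) = |c| * pnorm r z := by
  unfold pnorm
  simp only [Prod.smul_fst, Prod.smul_snd, smul_eq_mul, abs_mul]
  rw [Real.mul_rpow (abs_nonneg _) (abs_nonneg _), Real.mul_rpow (abs_nonneg _) (abs_nonneg _),
    ← mul_add, Real.mul_rpow (by positivity) (by positivity), ← Real.rpow_mul (abs_nonneg _),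
    mul_one_div_cancel hr.ne', Real.rpow_one]

lemma pnorm_pos {r : ℝ} {z : ℝ × ℝ} (hz : z ≠ 0) : 0 < pnorm r z := by
  unfold pnorm
  have : z.1 ≠ 0 ∨ z.2 ≠ 0 := by
    by_contra! h
    exact hz (Prod.ext h.1 h.2)
  rcases this with h | h
  · have := Real.rpow_pos_of_pos (abs_pos.2 h) r
    positivity
  · have := Real.rpow_pos_of_pos (abs_pos.2 h) r
    positivity

lemma abs_le_one_of {r a b : ℝ} (hr : 0 < r) (h : |a| ^ r + |b| ^ r = 1) : |a| ≤ 1 := by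
  have : |a| ^ r ≤ 1 := by have : 0 ≤ |b| ^ r := by positivity
                           linarith
  by_contra! h'
  linarith [Real.one_lt_rpow h' hr]

lemma app_add (A : Matrix (Fin 2) (Fin 2) ℝ) (z w : ℝ × ℝ) : app A (z + w) = app A z + app A w := by
  simp only [app, Prod.fst_add, Prod.snd_add, Prod.mk_add_mk]
  ext <;> simp <;> ring

lemma app_smul (A : Matrix (Fin 2) (Fin 2) ℝ) (c : ℝ) (z : ℝ × ℝ) : app A (c • z) = c • app A z := by
  simp only [app, Prod.smul_fst, Prod.smul_snd, smul_eq_mul, Prod.smul_mk]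
  ext <;> simp <;> ring

lemma continuous_app : Continuous fun u : Matrix (Fin 2) (Fin 2) ℝ × (ℝ × ℝ) => app u.1 u.2 := by
  unfold app
  fun_prop

/-- `A` is a contraction from ℓ^p_2 to ℓ^q_2, phrased vector by vector. -/
def IsContr (p q : ℝ) (A : Matrix (Fin 2) (Fin 2) ℝ) : Prop :=
  ∀ z : ℝ × ℝ, pnorm q (app A z) ≤ pnorm p z

lemma isCompact_pnorm_sphere {p : ℝ} (hp : 0 < p) : IsCompact {z : ℝ × ℝ | pnorm p z = 1} := by
  refine IsCompact.of_isClosed_subset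
    ((isCompact_Icc (a := (-1 : ℝ)) (b := 1)).prod (isCompact_Icc (a := (-1 : ℝ)) (b := 1)))
    (isClosed_eq (continuous_pnorm hp) continuous_const) ?_
  intro z hz
  have hz := (pnorm_eq_one_iff hp z).1 hz
  exact ⟨abs_le.1 (abs_le_one_of hp hz), abs_le.1 (abs_le_one_of hp (by rwa [add_comm] at hz))⟩

lemma pnorm_sphere_nonempty {p : ℝ} (hp : 0 < p) : {z : ℝ × ℝ | pnorm p z = 1}.Nonempty :=
  ⟨(1, 0), (pnorm_eq_one_iff hp _).2 (by simp [Real.zero_rpow hp.ne'])⟩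

/-- The supremum defining `opNorm` is attained, by compactness of the sphere. -/
lemma exists_opNorm_eq {p q : ℝ} (hp : 0 < p) (hq : 0 < q) (A : Matrix (Fin 2) (Fin 2) ℝ) :
    ∃ x, pnorm p x = 1 ∧ opNorm p q A = pnorm q (app A x) ∧
      ∀ z, pnorm p z = 1 → pnorm q (app A z) ≤ pnorm q (app A x) := by
  have hc : Continuous fun z => pnorm q (app A z) :=
    (continuous_pnorm hq).comp (continuous_app.comp (Continuous.prodMk continuous_const continuous_id))
  obtain ⟨x, hx, hmax⟩ := (isCompact_pnorm_sphere hp).exists_isMaxOn (pnorm_sphere_nonempty hp)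
    hc.continuousOn
  refine ⟨x, hx, ?_, fun z hz => hmax hz⟩
  refine IsGreatest.csSup_eq ⟨⟨x, hx, rfl⟩, ?_⟩
  rintro c ⟨z, hz, rfl⟩
  exact hmax hz

lemma mem_unitBall_iff {p q : ℝ} (hp : 0 < p) (hq : 0 < q) (A : Matrix (Fin 2) (Fin 2) ℝ) :
    A ∈ unitBall p q ↔ IsContr p q A := by
  obtain ⟨x, hx, he, hmax⟩ := exists_opNorm_eq hp hq A
  constructor
  · intro h z
    have h : opNorm p q A ≤ 1 := h
    by_cases hz : z = 0
    · subst hz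
      have : app A 0 = (0 : ℝ) • app A 0 := by rw [← app_smul, zero_smul]
      rw [this, pnorm_smul hq]
      simpa using pnorm_nonneg p 0
    · have hpos := pnorm_pos (r := p) hz
      have h1 := hmax ((pnorm p z)⁻¹ • z) (by
        rw [pnorm_smul hp, abs_of_pos (inv_pos.2 hpos), inv_mul_cancel₀ hpos.ne'])
      rw [app_smul, pnorm_smul hq, abs_of_pos (inv_pos.2 hpos), inv_mul_le_iff₀ hpos] at h1
      nlinarith
  · intro h
    show opNorm p q A ≤ 1
    rw [he, ← hx]
    exact h x

/-- If `T` lies inside a segment of contractions with endpoint `A`, then `A` agrees with `T` at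
every nonzero vector whose norm `T` preserves, because the ℓ^q norm is strictly convex. -/
lemma app_eq_of_segment {p q a b : ℝ} (hq1 : 1 < q) (hq2 : q < 2) (hp : 0 < p)
    {A B T : Matrix (Fin 2) (Fin 2) ℝ} (hA : IsContr p q A) (hB : IsContr p q B)
    (ha : 0 < a) (hb : 0 < b) (hab : a + b = 1) (hT : a • A + b • B = T) {z : ℝ × ℝ}
    (hz : z ≠ 0) (hTz : pnorm q (app T z) = pnorm p z) : app A z = app T z := by
  have hq : 0 < q := by linarith
  wlog h1 : pnorm p z = 1 generalizing z
  · have hpos := pnorm_pos (r := p) hz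
    have hc : 0 < (pnorm p z)⁻¹ := inv_pos.2 hpos
    have := @this ((pnorm p z)⁻¹ • z) (smul_ne_zero hc.ne' hz) (by
      rw [app_smul, pnorm_smul hq, pnorm_smul hp, hTz]) (by
      rw [pnorm_smul hp, abs_of_pos hc, inv_mul_cancel₀ hpos.ne'])
    rw [app_smul, app_smul] at this
    exact smul_right_injective _ hc.ne' this
  rw [h1, pnorm_eq_one_iff hq] at hTz
  have hle : ∀ {C}, IsContr p q C → |(app C z).1| ^ q + |(app C z).2| ^ q ≤ 1 := by
    intro C hC
    rw [← pnorm_rpow hq]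
    exact Real.rpow_le_one (pnorm_nonneg _ _) (h1 ▸ hC z) hq.le
  have hA' := hle hA
  have hB' := hle hB
  have e1 : (app T z).1 = a * (app A z).1 + b * (app B z).1 := by
    rw [← hT]; simp [app]; ring
  have e2 : (app T z).2 = a * (app A z).2 + b * (app B z).2 := by
    rw [← hT]; simp [app]; ring
  have hle1 : ∀ {u v : ℝ}, |u| ^ q + |v| ^ q ≤ 1 → |u| ≤ 1 := by
    intro u v h
    have h2 : |u| ^ q ≤ 1 := by
      have : 0 ≤ |v| ^ q := by positivity
      linarith
    by_contra! h'
    linarith [Real.one_lt_rpow h' hq]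
  have hle2 : ∀ {u v : ℝ}, |u| ^ q + |v| ^ q ≤ 1 → |v| ≤ 1 :=
    fun {u v} h => hle1 (u := v) (v := u) ((add_comm (|v| ^ q) (|u| ^ q)).trans_le h)
  generalize app A z = u at *
  generalize app B z = v at *
  generalize app T z = y at *
  obtain ⟨c, hc, H⟩ := abs_rpow_lower hq1 hq2
  have key : ∀ y u v : ℝ, |y| ≤ 1 → |u| ≤ 1 → |v| ≤ 1 → y = a * u + b * v →
      |y| ^ q + c * a * (u - y) ^ 2 ≤ a * |u| ^ q + b * |v| ^ q := by
    intro y u v hy hu hv e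
    have hyu : |u - y| ≤ 2 := by rw [abs_le] at *; constructor <;> linarith
    have hyv : |v - y| ≤ 2 := by rw [abs_le] at *; constructor <;> linarith
    have i1 := mul_le_mul_of_nonneg_left (H y (u - y) hy hyu) ha.le
    have i2 := mul_le_mul_of_nonneg_left (H y (v - y) hy hyv) hb.le
    rw [add_sub_cancel] at i1 i2
    have i3 : 0 ≤ b * (c * (v - y) ^ 2) := by positivity
    have e3 : a * (u - y) + b * (v - y) = 0 := by
      rw [mul_sub, mul_sub]; linear_combination (-y) * hab - e
    have e4 : a * |y| ^ q + b * |y| ^ q = |y| ^ q := by rw [← add_mul, hab, one_mul]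
    have e5 := congrArg (fun t => q * (|y| ^ (q - 2) * y) * t) e3
    simp only [mul_zero, mul_add] at e5
    linarith
  have k1 := key _ _ _ (hle1 hTz.le) (hle1 hA') (hle1 hB') e1
  have k2 := key _ _ _ (hle2 hTz.le) (hle2 hA') (hle2 hB') e2
  have i1 := mul_le_mul_of_nonneg_left hA' ha.le
  have i2 := mul_le_mul_of_nonneg_left hB' hb.le
  have hca : 0 < c * a := mul_pos hc ha
  have hs : c * a * ((u.1 - y.1) ^ 2 + (u.2 - y.2) ^ 2) ≤ c * a * 0 := by linarith
  have hs := le_of_mul_le_mul_left hs hca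
  have z1 : u.1 - y.1 = 0 := by nlinarith [sq_nonneg (u.1 - y.1), sq_nonneg (u.2 - y.2)]
  have z2 : u.2 - y.2 = 0 := by nlinarith [sq_nonneg (u.1 - y.1), sq_nonneg (u.2 - y.2)]
  exact Prod.ext (by linarith) (by linarith)

lemma nonpos_of_eventually_le {X C e : ℝ} (he : 0 < e)
    (h : ∀ᶠ s in 𝓝[>] (0 : ℝ), X ≤ C * s ^ e) : X ≤ 0 := by
  have : Tendsto (fun s : ℝ => C * s ^ e) (𝓝[>] 0) (𝓝 0) := by
    have := ((Real.continuous_rpow_const he.le).const_mul C).tendsto 0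
    simp only [Real.zero_rpow he.ne', mul_zero] at this
    exact this.mono_left nhdsWithin_le_nhds
  exact ge_of_tendsto this h

lemma eventually_abs_mul_le (d : ℝ) : ∀ᶠ s in 𝓝 (0 : ℝ), |s * d| ≤ 2 := by
  have : Continuous (fun s : ℝ => |s * d|) := by fun_prop
  exact (this.tendsto 0).eventually (ge_mem_nhds (by simp))

/-- The signed power `sgn t |t| ^ (p - 1)` in the form used for the derivative of `|·| ^ p`. -/
lemma spow_fst {p : ℝ} (hp : 1 < p) (t : ℝ) : Real.sign t * |t| ^ (p - 1) = |t| ^ (p - 2) * t := by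
  rcases lt_trichotomy t 0 with h | h | h
  · have := abs_rpow_mul_self (t := -t) hp (by linarith)
    rw [abs_neg] at this
    rw [Real.sign_of_neg h, abs_of_neg h] at *
    linarith
  · simp [h]
  · rw [Real.sign_of_pos h, abs_rpow_mul_self hp h.le, abs_of_pos h, one_mul]

lemma spow_dot {p : ℝ} (hp : 1 < p) (t : ℝ) : (Real.sign t * |t| ^ (p - 1)) * t = |t| ^ p := by
  rcases eq_or_ne t 0 with h | h
  · simp [h, Real.zero_rpow (by linarith : p ≠ 0)]
  · have h1 : Real.sign t * t = |t| := by
      rcases lt_or_gt_of_ne h with h | h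
      · rw [Real.sign_of_neg h, abs_of_neg h]; ring
      · rw [Real.sign_of_pos h, abs_of_pos h]; ring
    rw [mul_right_comm, h1, mul_comm, ← Real.rpow_add_one (abs_pos.2 h).ne']
    simp

/-- When `x` is a signed unit vector, the domain norm grows like `|s| ^ p = o(s²)` in the transverse
direction, while any movement in the range costs at least a multiple of `s²`. -/
lemma rigid_x {p q : ℝ} (hq1 : 1 < q) (hq2 : q < 2) (hp : 2 < p) {y1 y2 d1 d2 : ℝ}
    (hy : |y1| ^ q + |y2| ^ q = 1)
    (H : ∀ s : ℝ, |y1 + s * d1| ^ q + |y2 + s * d2| ^ q ≤ 1 + |s| ^ p) : d1 = 0 ∧ d2 = 0 := by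
  have hq : 0 < q := by linarith
  obtain ⟨c, hc, Hc⟩ := abs_rpow_lower hq1 hq2
  have h1 := abs_le_one_of hq hy
  have h2 := abs_le_one_of hq ((add_comm _ _).trans hy)
  have : c * (d1 ^ 2 + d2 ^ 2) ≤ 0 := by
    refine nonpos_of_eventually_le (C := 1) (e := p - 2) (by linarith) ?_
    filter_upwards [nhdsWithin_le_nhds (eventually_abs_mul_le d1),
      nhdsWithin_le_nhds (eventually_abs_mul_le d2), self_mem_nhdsWithin] with s hs1 hs2 hs
    have hs : 0 < s := hs
    have a1 := Hc y1 (s * d1) h1 hs1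
    have a2 := Hc y2 (s * d2) h2 hs2
    have a3 := Hc y1 (-s * d1) h1 (by rwa [neg_mul, abs_neg])
    have a4 := Hc y2 (-s * d2) h2 (by rwa [neg_mul, abs_neg])
    have a5 := H s
    have a6 := H (-s)
    rw [abs_neg, abs_of_pos hs] at a6
    rw [abs_of_pos hs] at a5
    have e : s ^ p = s ^ (p - 2) * s ^ 2 := by
      rw [← Real.rpow_natCast, ← Real.rpow_add hs]; norm_num
    rw [e] at a5 a6
    have : c * (d1 ^ 2 + d2 ^ 2) * s ^ 2 ≤ s ^ (p - 2) * s ^ 2 := by linarith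
    have := le_of_mul_le_mul_right this (by positivity)
    linarith
  have := nonpos_of_mul_nonpos_right this hc
  constructor <;> nlinarith [sq_nonneg d1, sq_nonneg d2]

/-- When `y` is a signed unit vector, a transverse movement in the range costs `|s d₂| ^ q`, which
dominates the growth `O(s²)` allowed by the domain. -/
lemma rigid_y {q : ℝ} (hq1 : 1 < q) (hq2 : q < 2) {y1 d1 d2 C : ℝ}
    (hy : |y1| ^ q = 1)
    (H : ∀ᶠ s in 𝓝 (0 : ℝ), |y1 + s * d1| ^ q + |s * d2| ^ q ≤ 1 + C * s ^ 2) :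
    d1 = 0 ∧ d2 = 0 := by
  have hq : 0 < q := by linarith
  obtain ⟨c, hc, Hc⟩ := abs_rpow_lower hq1 hq2
  have h1 : |y1| = 1 := (rpow_eq_one_iff' (abs_nonneg _) hq.ne').1 hy
  have ht : Tendsto (fun s : ℝ => -s) (𝓝 0) (𝓝 0) := by
    simpa using (continuous_neg (G := ℝ)).tendsto 0
  have HH : ∀ᶠ s in 𝓝[>] (0 : ℝ), 0 < s ∧ |s * d1| ≤ 2 ∧
      |y1 + s * d1| ^ q + |s * d2| ^ q ≤ 1 + C * s ^ 2 ∧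
      |y1 + -s * d1| ^ q + |-s * d2| ^ q ≤ 1 + C * (-s) ^ 2 := by
    filter_upwards [self_mem_nhdsWithin, nhdsWithin_le_nhds (eventually_abs_mul_le d1),
      nhdsWithin_le_nhds H, nhdsWithin_le_nhds (ht.eventually H)] with s a b c d using ⟨a, b, c, d⟩
  have hd2 : |d2| ^ q ≤ 0 := by
    refine nonpos_of_eventually_le (C := C) (e := 2 - q) (by linarith) ?_
    filter_upwards [HH] with s ⟨hs, hs1, a5, a6⟩
    have a1 := Hc y1 (s * d1) h1.le hs1
    have a3 := Hc y1 (-s * d1) h1.le (by rwa [neg_mul, abs_neg])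
    have e : |s * d2| ^ q = s ^ q * |d2| ^ q := by
      rw [abs_mul, abs_of_pos hs, Real.mul_rpow hs.le (abs_nonneg _)]
    have e' : |-s * d2| ^ q = s ^ q * |d2| ^ q := by rw [neg_mul, abs_neg, e]
    have e2 : s ^ 2 = s ^ (2 - q) * s ^ q := by
      rw [← Real.rpow_natCast, ← Real.rpow_add hs]; norm_num
    have e3 : 0 ≤ c * (s * d1) ^ 2 := by positivity
    rw [e] at a5
    rw [e', neg_sq] at a6
    have : s ^ q * |d2| ^ q ≤ C * s ^ 2 := by linarith
    rw [e2] at this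
    exact le_of_mul_le_mul_left (by linarith : s ^ q * |d2| ^ q ≤ s ^ q * (C * s ^ (2 - q)))
      (by positivity)
  have hd2' : d2 = 0 := by
    by_contra h
    linarith [Real.rpow_pos_of_pos (abs_pos.2 h) q]
  refine ⟨?_, hd2'⟩
  have hg : |y1| ^ (q - 2) = 1 := by rw [h1, Real.one_rpow]
  have hle : ∀ k : ℝ, (k = y1 * d1 ∨ k = -(y1 * d1)) → q * k ≤ 0 := by
    intro k hk
    refine nonpos_of_eventually_le (C := C) (e := 1) (by norm_num) ?_
    filter_upwards [HH] with s ⟨hs, hs1, a5, a6⟩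
    have a1 := Hc y1 (s * d1) h1.le hs1
    have a3 := Hc y1 (-s * d1) h1.le (by rwa [neg_mul, abs_neg])
    have e3 : 0 ≤ c * (s * d1) ^ 2 := by positivity
    have e4 : 0 ≤ |s * d2| ^ q := by positivity
    have e5 : 0 ≤ |-s * d2| ^ q := by positivity
    rw [hg] at a1 a3
    rw [Real.rpow_one]
    refine le_of_mul_le_mul_left (a := s) ?_ hs
    rcases hk with rfl | rfl <;> nlinarith
  have g1 := nonpos_of_mul_nonpos_right (hle _ (Or.inl rfl)) hq
  have g2 := nonpos_of_mul_nonpos_right (hle _ (Or.inr rfl)) hq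
  have : y1 * d1 = 0 := by linarith
  rcases mul_eq_zero.1 this with h | h
  · rw [h] at h1; simp at h1
  · exact h

/-- A contraction that attains norm one at `x`, with some coordinate of `x` or of its image `y` equal to
zero, is determined by `x` and `y`: it kills the tangent direction `rot (spow x (p - 1))` of the
unit sphere of ℓ^p at `x`. -/
lemma rigid {p q : ℝ} (hq1 : 1 < q) (hq2 : q < 2) (hp : 2 < p) {x y : ℝ × ℝ}
    (hx : pnorm p x = 1) (hy : pnorm q y = 1) (hdeg : x.1 * x.2 * y.1 * y.2 = 0)
    {A : Matrix (Fin 2) (Fin 2) ℝ} (hA : IsContr p q A) (hAx : app A x = y) :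
    A = tensor (spow x (p - 1)) y := by
  have hq : 0 < q := by linarith
  have hp0 : 0 < p := by linarith
  have hp1 : 1 < p := by linarith
  rw [pnorm_eq_one_iff hp0] at hx
  rw [pnorm_eq_one_iff hq] at hy
  suffices h : app A (rot (spow x (p - 1))) = 0 by
    have hd := hx
    rw [← spow_dot hp1, ← spow_dot hp1] at hd
    have e1 := congrArg Prod.fst hAx
    have e2 := congrArg Prod.snd hAx
    have e3 := congrArg Prod.fst h
    have e4 := congrArg Prod.snd h
    simp only [app, rot, spow, Prod.fst_zero, Prod.snd_zero] at e1 e2 e3 e4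
    unfold tensor spow
    generalize Real.sign x.1 * |x.1| ^ (p - 1) = X1 at *
    generalize Real.sign x.2 * |x.2| ^ (p - 1) = X2 at *
    ext i j
    fin_cases i <;> fin_cases j <;> simp
    · linear_combination X1 * e1 - A 0 0 * hd - x.2 * e3
    · linear_combination X2 * e1 - A 0 1 * hd + x.1 * e3
    · linear_combination X1 * e2 - A 1 0 * hd - x.2 * e4
    · linear_combination X2 * e2 - A 1 1 * hd + x.1 * e4
  set w := rot (spow x (p - 1)) with hw
  set d := app A w with hd
  -- transfer of growth bounds from the domain to the range
  have hgrow : ∀ s E : ℝ, 0 ≤ E → |x.1 + s * w.1| ^ p + |x.2 + s * w.2| ^ p ≤ 1 + E →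
      |y.1 + s * d.1| ^ q + |y.2 + s * d.2| ^ q ≤ 1 + E := by
    intro s E hE h
    have h1 := hA (x + s • w)
    rw [app_add, app_smul, hAx] at h1
    have h2 := Real.rpow_le_rpow (pnorm_nonneg _ _) h1 hq.le
    rw [pnorm_rpow hq] at h2
    refine h2.trans ?_
    have h3 : pnorm p (x + s • w) ^ p ≤ 1 + E := by rw [pnorm_rpow hp0]; exact h
    have h4 : pnorm p (x + s • w) ^ q = (pnorm p (x + s • w) ^ p) ^ (q / p) := by
      rw [← Real.rpow_mul (pnorm_nonneg _ _)]; congr 1; field_simp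
    rw [h4]
    refine (Real.rpow_le_rpow (Real.rpow_nonneg (pnorm_nonneg _ _) _) h3 (by positivity)).trans ?_
    have := Real.rpow_le_rpow_of_exponent_le (x := 1 + E) (by linarith)
      ((div_le_one hp0).2 (by linarith : q ≤ p))
    rwa [Real.rpow_one] at this
  have hdeg' : x.1 * x.2 = 0 ∨ y.1 * y.2 = 0 := by
    rw [mul_assoc] at hdeg
    exact mul_eq_zero.1 hdeg
  rcases hdeg' with h | h
  · -- `x` is a signed unit vector, and so is `w`
    have hw' : ∀ s : ℝ, |x.1 + s * w.1| ^ p + |x.2 + s * w.2| ^ p = 1 + |s| ^ p := by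
      intro s
      rcases mul_eq_zero.1 h with h | h
      · simp only [h, abs_zero, Real.zero_rpow hp0.ne', zero_add] at hx
        have h1 : |x.2| = 1 := (rpow_eq_one_iff' (abs_nonneg _) hp0.ne').1 hx
        have h2 : |w.1| = 1 := by
          simp only [hw, rot, spow, abs_neg, abs_mul, h1, Real.one_rpow]
          rcases Real.sign_apply_eq_of_ne_zero x.2 (by intro h; simp [h] at h1) with h | h <;>
            simp [h]
        have h3 : w.2 = 0 := by simp [hw, rot, spow, h]
        rw [h, h3, zero_add, abs_mul, h2, mul_one, mul_zero, add_zero, hx, add_comm]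
      · simp only [h, abs_zero, Real.zero_rpow hp0.ne', add_zero] at hx
        have h1 : |x.1| = 1 := (rpow_eq_one_iff' (abs_nonneg _) hp0.ne').1 hx
        have h2 : |w.2| = 1 := by
          simp only [hw, rot, spow, abs_mul, h1, Real.one_rpow]
          rcases Real.sign_apply_eq_of_ne_zero x.1 (by intro h; simp [h] at h1) with h | h <;>
            simp [h]
        have h3 : w.1 = 0 := by simp [hw, rot, spow, h]
        rw [h, h3, zero_add, abs_mul, h2, mul_one, mul_zero, add_zero, hx]
    have := rigid_x hq1 hq2 hp hy (fun s => hgrow s _ (by positivity) (hw' s).le)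
    exact Prod.ext this.1 this.2
  · obtain ⟨C, hC, H⟩ := abs_rpow_upper hp
    have hx1 := abs_le_one_of hp0 hx
    have hx2 := abs_le_one_of hp0 ((add_comm _ _).trans hx)
    have hev : ∀ᶠ s in 𝓝 (0 : ℝ), |y.1 + s * d.1| ^ q + |y.2 + s * d.2| ^ q ≤
        1 + (C * (w.1 ^ 2 + w.2 ^ 2)) * s ^ 2 := by
      filter_upwards [eventually_abs_mul_le w.1, eventually_abs_mul_le w.2] with s hs1 hs2
      refine hgrow s _ (by positivity) ?_
      have a1 := H x.1 (s * w.1) hx1 hs1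
      have a2 := H x.2 (s * w.2) hx2 hs2
      have e : |x.1| ^ (p - 2) * x.1 * w.1 + |x.2| ^ (p - 2) * x.2 * w.2 = 0 := by
        simp only [hw, rot, spow, spow_fst hp1]; ring
      have e' := congrArg (fun t => p * s * t) e
      simp only [mul_zero] at e'
      linarith
    rcases mul_eq_zero.1 h with h | h
    · simp only [h, abs_zero, Real.zero_rpow hq.ne', zero_add] at hy hev
      have := rigid_y hq1 hq2 hy (hev.mono fun s hs => (add_comm _ _).trans_le hs)
      exact Prod.ext this.2 this.1
    · simp only [h, abs_zero, Real.zero_rpow hq.ne', zero_add, add_zero] at hy hev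
      have := rigid_y hq1 hq2 hy hev
      exact Prod.ext this.1 this.2

lemma linearIndependent_iff_det (z w : ℝ × ℝ) :
    LinearIndependent ℝ ![z, w] ↔ z.1 * w.2 - z.2 * w.1 ≠ 0 := by
  rw [LinearIndependent.pair_iff]
  constructor
  · intro h hd
    have h1 := h w.2 (-z.2) (Prod.ext (by simp; linarith) (by simp; ring))
    have h2 := h w.1 (-z.1) (Prod.ext (by simp; ring) (by simp; linarith))
    have h3 := h 1 0 (Prod.ext (by simp; linarith [h2.2]) (by simp; linarith [h1.2]))
    exact one_ne_zero h3.1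
  · intro hd s t h
    have e1 := congrArg Prod.fst h
    have e2 := congrArg Prod.snd h
    simp at e1 e2
    refine ⟨?_, ?_⟩
    · refine (mul_eq_zero.1 (?_ : s * (z.1 * w.2 - z.2 * w.1) = 0)).resolve_right hd
      linear_combination w.2 * e1 - w.1 * e2
    · refine (mul_eq_zero.1 (?_ : t * (z.1 * w.2 - z.2 * w.1) = 0)).resolve_right hd
      linear_combination z.1 * e2 - z.2 * e1

/-! ### Perturbing an operator with a single nondegenerate maximiser -/

lemma pnorm_lin {r x1 x2 a b s : ℝ} (hx1 : x1 ≠ 0) (hx2 : x2 ≠ 0)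
    (hA : 0 < 1 + a * s) (hB : 0 < 1 + b * s) :
    pnorm r (x1 * (1 + a * s), x2 * (1 + b * s)) =
      Real.exp (LL r (|x1| ^ r) (|x2| ^ r) a b s) := by
  have hf := ff_pos (r := r) (Real.rpow_pos_of_pos (abs_pos.2 hx1) r)
    (Real.rpow_pos_of_pos (abs_pos.2 hx2) r) hA hB
  have e : |x1 * (1 + a * s)| ^ r + |x2 * (1 + b * s)| ^ r =
      ff r (|x1| ^ r) (|x2| ^ r) a b s := by
    rw [abs_mul, abs_mul, abs_of_pos hA, abs_of_pos hB, Real.mul_rpow (abs_nonneg _) hA.le,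
      Real.mul_rpow (abs_nonneg _) hB.le]
    rfl
  unfold pnorm LL
  simp only [e]
  rw [Real.rpow_def_of_pos hf, mul_one_div]

/-- Suppose a contraction attains norm one only on the line through `x`, and no coordinate of `x` or of
its image `y` vanishes. Let `D` be the rank-one operator that kills `x` and sends the tangent
direction of the ℓ^p sphere at `x` to the tangent direction of the ℓ^q sphere at `y`. By the strict
second-order inequality, `T + t D` stays below the ℓ^p norm near the line of `x` for all small `t`;
away from that line the inequality is strict for `T` and compactness applies. -/
lemma exists_perturbation {p q : ℝ} (hq1 : 1 < q) (hq2 : q < 2) (hp : 2 < p)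
    {T : Matrix (Fin 2) (Fin 2) ℝ} (hT : IsContr p q T) {x y : ℝ × ℝ}
    (hx : pnorm p x = 1) (hy : pnorm q y = 1) (hTx : app T x = y)
    (hxy : x.1 * x.2 * y.1 * y.2 ≠ 0)
    (huniq : ∀ z, pnorm q (app T z) = pnorm p z → x.1 * z.2 - x.2 * z.1 = 0) :
    ∃ D : Matrix (Fin 2) (Fin 2) ℝ, D ≠ 0 ∧ IsContr p q (T + D) ∧ IsContr p q (T - D) := by
  have hq : 0 < q := by linarith
  have hp0 : 0 < p := by linarith
  have hp1 : 1 < p := by linarith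
  obtain ⟨x1, x2⟩ := x
  obtain ⟨y1, y2⟩ := y
  have hy2 : y2 ≠ 0 := right_ne_zero_of_mul hxy
  have hxy' := left_ne_zero_of_mul hxy
  have hy1 : y1 ≠ 0 := right_ne_zero_of_mul hxy'
  have hxy'' := left_ne_zero_of_mul hxy'
  have hx2 : x2 ≠ 0 := right_ne_zero_of_mul hxy''
  have hx1 : x1 ≠ 0 := left_ne_zero_of_mul hxy''
  rw [pnorm_eq_one_iff hp0] at hx
  rw [pnorm_eq_one_iff hq] at hy
  have hα := Real.rpow_pos_of_pos (abs_pos.2 hx1) p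
  have hβ := Real.rpow_pos_of_pos (abs_pos.2 hx2) p
  have hγ := Real.rpow_pos_of_pos (abs_pos.2 hy1) q
  have hδ := Real.rpow_pos_of_pos (abs_pos.2 hy2) q
  have hlinp := fun a b s => @pnorm_lin p x1 x2 a b s hx1 hx2
  have hlinq := fun a b s => @pnorm_lin q y1 y2 a b s hy1 hy2
  simp only at hx hy huniq
  set α := |x1| ^ p
  set β := |x2| ^ p
  set γ := |y1| ^ q
  set δ := |y2| ^ q
  -- moving `x` along the line `(x1 (1 - β s), x2 (1 + α s))`, tangent to the ℓ^p sphere, moves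
  -- `y` along the line `(y1 (1 + c s), y2 (1 + d s))`
  obtain ⟨c, hc⟩ : ∃ c, c = (app T (-β * x1, α * x2)).1 / y1 := ⟨_, rfl⟩
  obtain ⟨d, hd⟩ : ∃ d, d = (app T (-β * x1, α * x2)).2 / y2 := ⟨_, rfl⟩
  rw [eq_div_iff hy1] at hc
  rw [eq_div_iff hy2] at hd
  have hTs : ∀ s, app T (x1 * (1 + -β * s), x2 * (1 + α * s)) =
      (y1 * (1 + c * s), y2 * (1 + d * s)) := by
    intro s
    have e1 := congrArg Prod.fst hTx
    have e2 := congrArg Prod.snd hTx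
    simp only [app] at hc hd e1 e2 ⊢
    ext
    · simp only; linear_combination e1 - s * hc
    · simp only; linear_combination e2 - s * hd
  have hab : α * -β + β * α = 0 := by ring
  have hL : ∀ᶠ s in 𝓝 (0 : ℝ), LL q γ δ c d s ≤ LL p α β (-β) α s := by
    filter_upwards [eventually_lin_pos (-β), eventually_lin_pos α, eventually_lin_pos c,
      eventually_lin_pos d] with s i1 i2 i3 i4
    have := hT (x1 * (1 + -β * s), x2 * (1 + α * s))
    rwa [hTs, hlinp _ _ _ i1 i2, hlinq _ _ _ i3 i4, Real.exp_le_exp] at this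
  have hcd := (first_order hq1 hp1 hα hβ hγ hδ hx hy hL).trans hab
  have hlt := second_order hq1 hq2 hp hα hβ hγ hδ hx hy hab hcd (by linarith) hL
  obtain ⟨κ, hκ⟩ : ∃ κ, κ = d - c := ⟨_, rfl⟩
  have hcκ : c = -δ * κ := by rw [hκ]; linear_combination hcd - c * hy
  have hdκ : d = γ * κ := by rw [hκ]; linear_combination hcd - d * hy
  have hlt' : (q - 1) * γ * δ * κ ^ 2 < (p - 1) * α * β * (-β - α) ^ 2 := by
    have : κ ^ 2 = (c - d) ^ 2 := by rw [hκ]; ring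
    rwa [this]
  have hpert := perturb hq1 hp1 hα hβ hγ hδ hx hy hab hlt'
  -- the four linear factors stay positive, so that the norms are given by `pnorm_lin`
  have hpos : ∀ f : ℝ × ℝ → ℝ, Continuous f → f (0, 0) = 0 →
      ∀ᶠ u in 𝓝 ((0 : ℝ), (0 : ℝ)), 0 < 1 + f u := by
    intro f hf h0
    exact ((continuous_const.add hf).tendsto (0, 0)).eventually (lt_mem_nhds (by simp [h0]))
  have hpert' : ∀ᶠ u in 𝓝 ((0 : ℝ), (0 : ℝ)),
      pnorm q (y1 * (1 + -δ * (κ + u.2) * u.1), y2 * (1 + γ * (κ + u.2) * u.1)) ≤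
        pnorm p (x1 * (1 + -β * u.1), x2 * (1 + α * u.1)) := by
    filter_upwards [hpert, hpos (fun u => -δ * (κ + u.2) * u.1) (by fun_prop) (by simp),
      hpos (fun u => γ * (κ + u.2) * u.1) (by fun_prop) (by simp),
      hpos (fun u => -β * u.1) (by fun_prop) (by simp),
      hpos (fun u => α * u.1) (by fun_prop) (by simp)] with u i0 i1 i2 i3 i4
    rwa [hlinp _ _ _ i3 i4, hlinq _ _ _ i1 i2, Real.exp_le_exp]
  clear_value α β γ δ
  set D := tensor (-1 / x1, 1 / x2) (-δ * y1, γ * y2) with hD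
  have hD0 : D ≠ 0 := by
    intro h
    have := congrFun (congrFun h 0) 0
    simp [hD, tensor, hδ.ne', hx1, hy1] at this
  -- Each `z` off the kernel of `m` is `m • (x1 (1 - β σ), x2 (1 + α σ))` with `σ = ℓ / m`, where
  -- `ℓ z = z.2 / x2 - z.1 / x1` and `m z = α z.1 / x1 + β z.2 / x2`. As `D z = ℓ z • (-δ y1, γ y2)`,
  -- adding `t • D` changes the slope `κ` into `κ + t`.
  have happ : ∀ (t : ℝ) (z : ℝ × ℝ), α * z.1 / x1 + β * z.2 / x2 ≠ 0 →
      pnorm q (y1 * (1 + -δ * (κ + t) * ((z.2 / x2 - z.1 / x1) / (α * z.1 / x1 + β * z.2 / x2))),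
        y2 * (1 + γ * (κ + t) * ((z.2 / x2 - z.1 / x1) / (α * z.1 / x1 + β * z.2 / x2)))) ≤
      pnorm p (x1 * (1 + -β * ((z.2 / x2 - z.1 / x1) / (α * z.1 / x1 + β * z.2 / x2))),
        x2 * (1 + α * ((z.2 / x2 - z.1 / x1) / (α * z.1 / x1 + β * z.2 / x2)))) →
      pnorm q (app (T + t • D) z) ≤ pnorm p z := by
    intro t z hm h
    obtain ⟨m, hmd⟩ : ∃ m, m = α * z.1 / x1 + β * z.2 / x2 := ⟨_, rfl⟩
    obtain ⟨l, hld⟩ : ∃ l, l = z.2 / x2 - z.1 / x1 := ⟨_, rfl⟩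
    rw [← hmd, ← hld] at h
    rw [← hmd] at hm
    obtain ⟨σ, hσ⟩ : ∃ σ, σ = l / m := ⟨_, rfl⟩
    rw [← hσ] at h
    have hσ' : m * σ = l := by rw [hσ]; field_simp
    have hz : z = m • (x1 * (1 + -β * σ), x2 * (1 + α * σ)) := by
      have hz1 : x1 * (z.1 / x1) = z.1 := by field_simp
      have hz2 : x2 * (z.2 / x2) = z.2 := by field_simp
      rw [mul_div_assoc, mul_div_assoc] at hmd
      ext
      · simp only [Prod.smul_fst, smul_eq_mul]
        linear_combination -hz1 + x1 * β * hσ' - x1 * hmd + β * x1 * hld - z.1 / x1 * x1 * hx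
      · simp only [Prod.smul_snd, smul_eq_mul]
        linear_combination -hz2 - x2 * α * hσ' - x2 * hmd - α * x2 * hld - z.2 / x2 * x2 * hx
    have hTz : app T z = m • (y1 * (1 + c * σ), y2 * (1 + d * σ)) := by
      conv_lhs => rw [hz]
      rw [app_smul, hTs]
    have hDz : app (T + t • D) z =
        m • (y1 * (1 + -δ * (κ + t) * σ), y2 * (1 + γ * (κ + t) * σ)) := by
      have e1 := congrArg Prod.fst hTz
      have e2 := congrArg Prod.snd hTz
      simp only [app, Prod.smul_fst, Prod.smul_snd, smul_eq_mul] at e1 e2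
      rw [hcκ] at e1
      rw [hdκ] at e2
      ext
      · simp [app, hD, tensor]
        linear_combination e1 + t * δ * y1 * (hld + hσ')
      · simp [app, hD, tensor]
        linear_combination e2 - t * γ * y2 * (hld + hσ')
    rw [hDz, pnorm_smul hq]
    conv_rhs => rw [hz, pnorm_smul hp0]
    exact mul_le_mul_of_nonneg_left h (abs_nonneg _)
  have hcont : Continuous fun u : ℝ × (ℝ × ℝ) => app (T + u.1 • D) u.2 :=
    continuous_app.comp (by fun_prop : Continuous fun u : ℝ × (ℝ × ℝ) => (T + u.1 • D, u.2))
  have key : ∀ᶠ t in 𝓝 (0 : ℝ), ∀ z ∈ Metric.sphere (0 : ℝ × ℝ) 1,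
      pnorm q (app (T + t • D) z) ≤ pnorm p z := by
    refine IsCompact.eventually_forall_of_forall_eventually (isCompact_sphere _ _) ?_
    intro z hz
    have hz0 : z ≠ 0 := by rintro rfl; simp at hz
    rcases (hT z).lt_or_eq with h | h
    · have c1 : Continuous fun u : ℝ × (ℝ × ℝ) => pnorm q (app (T + u.1 • D) u.2) :=
        (continuous_pnorm hq).comp hcont
      have c2 : Continuous fun u : ℝ × (ℝ × ℝ) => pnorm p u.2 :=
        (continuous_pnorm hp0).comp continuous_snd
      filter_upwards [(c1.tendsto (0, z)).eventually_lt (c2.tendsto (0, z)) (by simpa using h)]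
        with u hu using hu.le
    · -- `T` attains its norm at `z`, so `z` is a multiple of `x` and `ℓ z = 0`
      have hu := huniq z h
      have hl : z.2 / x2 - z.1 / x1 = 0 := by field_simp; linarith
      have hl' : z.2 / x2 = z.1 / x1 := sub_eq_zero.1 hl
      have hm : α * z.1 / x1 + β * z.2 / x2 ≠ 0 := by
        rw [mul_div_assoc, mul_div_assoc, hl', ← add_mul, hx, one_mul]
        intro h0
        have h1 : z.1 = 0 := by simpa [hx1] using h0
        rw [h1, mul_zero, sub_zero] at hu
        exact hz0 (Prod.ext h1 ((mul_eq_zero.1 hu).resolve_left hx1))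
      have cm : Continuous fun u : ℝ × (ℝ × ℝ) => α * u.2.1 / x1 + β * u.2.2 / x2 := by fun_prop
      have cl : Continuous fun u : ℝ × (ℝ × ℝ) => u.2.2 / x2 - u.2.1 / x1 := by fun_prop
      have ct : Tendsto (fun u : ℝ × (ℝ × ℝ) =>
          ((u.2.2 / x2 - u.2.1 / x1) / (α * u.2.1 / x1 + β * u.2.2 / x2), u.1))
          (𝓝 (0, z)) (𝓝 (0, 0)) := by
        refine Tendsto.prodMk_nhds ?_ (continuous_fst.tendsto _)
        have := (cl.tendsto (0, z)).div (cm.tendsto (0, z)) hm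
        simp only [hl, zero_div] at this
        exact this
      filter_upwards [ct.eventually hpert', (cm.tendsto (0, z)).eventually (isOpen_ne.mem_nhds hm)]
        with u h1 h2
      exact happ u.1 u.2 h2 h1
  have key' : ∀ᶠ t in 𝓝 (0 : ℝ), IsContr p q (T + t • D) := by
    filter_upwards [key] with t ht z
    by_cases hz : z = 0
    · subst hz
      have : app (T + t • D) 0 = 0 := by simp [app]
      have h0 : pnorm q 0 = 0 := by simp [pnorm, Real.zero_rpow hq.ne', hq.ne']
      rw [this, h0]
      exact pnorm_nonneg _ _
    · have hn : 0 < ‖z‖⁻¹ := inv_pos.2 (norm_pos_iff.2 hz)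
      have := ht (‖z‖⁻¹ • z) (by simp [norm_smul, hz])
      rw [app_smul, pnorm_smul hq, pnorm_smul hp0] at this
      exact le_of_mul_le_mul_left this (abs_pos.2 hn.ne')
  have hneg : Tendsto (fun s : ℝ => -s) (𝓝 0) (𝓝 0) := by
    simpa using (continuous_neg (G := ℝ)).tendsto 0
  have key2 : ∀ᶠ t in 𝓝[>] (0 : ℝ), IsContr p q (T + t • D) ∧ IsContr p q (T + (-t) • D) :=
    nhdsWithin_le_nhds (key'.and (hneg.eventually key'))
  obtain ⟨t, ⟨h1, h2⟩, ht⟩ := (key2.and self_mem_nhdsWithin).exists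
  have ht : 0 < t := ht
  refine ⟨t • D, smul_ne_zero ht.ne' hD0, h1, ?_⟩
  rwa [neg_smul, ← sub_eq_add_neg] at h2

lemma app_tensor {p : ℝ} (hp : 1 < p) {x : ℝ × ℝ} (hx : |x.1| ^ p + |x.2| ^ p = 1) (y : ℝ × ℝ) :
    app (tensor (spow x (p - 1)) y) x = y := by
  rw [← spow_dot hp, ← spow_dot hp] at hx
  ext
  · simp only [app, tensor, spow, Matrix.of_apply, Matrix.cons_val', Matrix.cons_val_zero,
      Matrix.cons_val_one, Matrix.cons_val_fin_one]
    linear_combination y.1 * hx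
  · simp only [app, tensor, spow, Matrix.of_apply, Matrix.cons_val', Matrix.cons_val_zero,
      Matrix.cons_val_one, Matrix.cons_val_fin_one]
    linear_combination y.2 * hx

lemma ext_of_app_eq {A B : Matrix (Fin 2) (Fin 2) ℝ} {z w : ℝ × ℝ}
    (hd : z.1 * w.2 - z.2 * w.1 ≠ 0) (hz : app A z = app B z) (hw : app A w = app B w) :
    A = B := by
  simp only [app, Prod.mk.injEq] at hz hw
  ext i j
  fin_cases i <;> fin_cases j <;> refine mul_right_cancel₀ hd ?_
  · show A 0 0 * _ = B 0 0 * _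
    linear_combination w.2 * hz.1 - z.2 * hw.1
  · show A 0 1 * _ = B 0 1 * _
    linear_combination z.1 * hw.1 - w.1 * hz.1
  · show A 1 0 * _ = B 1 0 * _
    linear_combination w.2 * hz.2 - z.2 * hw.2
  · show A 1 1 * _ = B 1 1 * _
    linear_combination z.1 * hw.2 - w.1 * hz.2

/-! ### Extreme contractions -/

/-- Extreme contractions from ℓ^p_2 to ℓ^q_2 for 1 < q < 2 < p < ∞. -/
theorem stmt_7 (p q : ℝ) (hq1 : 1 < q) (hq2 : q < 2) (hp : 2 < p)
    (T : Matrix (Fin 2) (Fin 2) ℝ) (hT : opNorm p q T = 1) :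
    T ∈ Set.extremePoints ℝ (unitBall p q) ↔
      ((∃ z w : ℝ × ℝ, LinearIndependent ℝ ![z, w] ∧
          pnorm q (app T z) = pnorm p z ∧ pnorm q (app T w) = pnorm p w) ∨
       (∃ x y : ℝ × ℝ, pnorm p x = 1 ∧ pnorm q y = 1 ∧
          x.1 * x.2 * y.1 * y.2 = 0 ∧ T = tensor (spow x (p - 1)) y)) := by
  have hq : 0 < q := by linarith
  have hp0 : 0 < p := by linarith
  have hp1 : 1 < p := by linarith
  have hTb : T ∈ unitBall p q := hT.le
  have hTc := (mem_unitBall_iff hp0 hq T).1 hTb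
  rw [mem_extremePoints_iff_left]
  constructor
  · rintro ⟨-, hext⟩
    obtain ⟨x, hx, hTx, -⟩ := exists_opNorm_eq hp0 hq T
    rw [hT] at hTx
    by_contra! hno
    obtain ⟨hno1, hno2⟩ := hno
    have hdeg : x.1 * x.2 * (app T x).1 * (app T x).2 ≠ 0 := fun h =>
      hno2 x _ hx hTx.symm h (rigid hq1 hq2 hp hx hTx.symm h hTc rfl)
    obtain ⟨D, hD0, hD1, hD2⟩ := exists_perturbation hq1 hq2 hp hTc hx hTx.symm rfl hdeg (by
      intro z hz
      by_contra h
      exact hno1 x z ((linearIndependent_iff_det x z).2 h) (hTx.symm.trans hx.symm) hz)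
    have := hext _ ((mem_unitBall_iff hp0 hq _).2 hD1) _ ((mem_unitBall_iff hp0 hq _).2 hD2)
      ⟨1 / 2, 1 / 2, by norm_num, by norm_num, by norm_num, by
        rw [smul_add, smul_sub, add_add_sub_cancel, ← add_smul]; norm_num⟩
    exact hD0 (by simpa using this)
  · intro h
    refine ⟨hTb, ?_⟩
    rintro A hA B hB ⟨a, b, ha, hb, hab, hT'⟩
    have hA := (mem_unitBall_iff hp0 hq A).1 hA
    have hB := (mem_unitBall_iff hp0 hq B).1 hB
    have hagree : ∀ z : ℝ × ℝ, z ≠ 0 → pnorm q (app T z) = pnorm p z → app A z = app T z :=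
      fun z hz hTz => app_eq_of_segment hq1 hq2 hp0 hA hB ha hb hab hT' hz hTz
    rcases h with ⟨z, w, hzw, hz, hw⟩ | ⟨x, y, hx, hy, hdeg, rfl⟩
    · rw [linearIndependent_iff_det] at hzw
      exact ext_of_app_eq hzw
        (hagree z (by rintro rfl; simp at hzw) hz) (hagree w (by rintro rfl; simp at hzw) hw)
    · have hxy := app_tensor hp1 ((pnorm_eq_one_iff hp0 x).1 hx) y
      have hx0 : x ≠ 0 := by
        rintro rfl
        simp [pnorm, Real.zero_rpow hp0.ne', hp0.ne'] at hx
      refine rigid hq1 hq2 hp hx hy hdeg hA ?_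
      rw [hagree x hx0 (by rw [hxy, hx, hy]), hxy]
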